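/- For every n ≥ 2, det(B_n) = ∏_{k=1}^{n} k^{2^{n−1−k}(n+2−k)}; moreover det(B_0) = 1 and det(B_1) = −1. In particular, B_n is invertible for every n ≥ 0. -/

import Mathlib

/-!
In block form, for every integer `m`,
`A_{n+1} + m B_{n+1} = [[(m+1) A_n, (m+1) A_n], [A_n, -(m+1) B_n]]`.
Pulling the factor `m + 1` out of the first block row and then subtracting that row from the second
leaves a block triangular matrix, so with `s = (-1)^(2^n)`
`det (A_{n+1} + m B_{n+1}) = s (m+1)^(2^n) det A_n det (A_n + (m+1) B_n)`,
while `det B_{n+1} = s det A_n det B_n` directly. The family `A_n + m B_n` is thus closed under the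
reduction, and induction on `n` (for all `m` at once) gives
`det (A_n + m B_n) = det B_n (m+n+1) ∏_{k=1}^{n} (m+k)^(2^(n-k))` (`det_pencil`).
At `m = 0` this expresses `det A_n` through `det B_n`, so that
`det B_{n+1} = s (det B_n)^2 (n+1) ∏_{k=1}^{n} k^(2^(n-k))` (`det_Bmat_succ`).
Here `s = -1` only for `n = 0`, and the product formula follows by induction from `n = 2`.
-/


open Finset

/-- Restriction of a subset of `Fin (n+1)` to `Fin n` (forgetting the top element). -/
def resSet {n : ℕ} (I : Finset (Fin (n + 1))) : Finset (Fin n) :=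
  Finset.univ.filter (fun j : Fin n => Fin.castSucc j ∈ I)

mutual
  /-- The matrix `A_n`, rows/columns indexed by subsets of `{1,…,n}` (element `j`
  of `[n]` corresponds to `j-1 : Fin n`, i.e. anti-lexicographic/binary order). -/
  def Amat : (n : ℕ) → Matrix (Finset (Fin n)) (Finset (Fin n)) ℤ
    | 0 => Matrix.of fun _ _ => 1
    | n + 1 => Matrix.of fun I J =>
        if Fin.last n ∈ I then
          if Fin.last n ∈ J then - Bmat n (resSet I) (resSet J)
          else Amat n (resSet I) (resSet J)
        else Amat n (resSet I) (resSet J)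
  /-- The matrix `B_n`. -/
  def Bmat : (n : ℕ) → Matrix (Finset (Fin n)) (Finset (Fin n)) ℤ
    | 0 => Matrix.of fun _ _ => 1
    | n + 1 => Matrix.of fun I J =>
        if Fin.last n ∈ I then
          if Fin.last n ∈ J then - Bmat n (resSet I) (resSet J)
          else 0
        else Amat n (resSet I) (resSet J)
end

/-- The Walsh-Hadamard matrix `H_n`. -/
def Hmat : (n : ℕ) → Matrix (Finset (Fin n)) (Finset (Fin n)) ℤ
  | 0 => Matrix.of fun _ _ => 1
  | n + 1 => Matrix.of fun I J =>
      if Fin.last n ∈ I ∧ Fin.last n ∈ J then - Hmat n (resSet I) (resSet J)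
      else Hmat n (resSet I) (resSet J)

/-- The Möbius matrix `M_n` of the boolean lattice. -/
def Mobmat (n : ℕ) : Matrix (Finset (Fin n)) (Finset (Fin n)) ℤ :=
  Matrix.of fun I J => if I ⊆ J then (-1) ^ (J \ I).card else 0

/-- The zeta matrix `Z_n` of the boolean lattice. -/
def Zetamat (n : ℕ) : Matrix (Finset (Fin n)) (Finset (Fin n)) ℤ :=
  Matrix.of fun I J => if I ⊆ J then 1 else 0

/-- The subset of `[n] = {1,…,n}` corresponding to a subset of `Fin n`. -/
def natSet {n : ℕ} (I : Finset (Fin n)) : Finset ℕ := Finset.image (fun j : Fin n => (j : ℕ) + 1) I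

/-- The ordinal number of a subset in the anti-lexicographic order. -/
def ordFin {n : ℕ} (I : Finset (Fin n)) : ℕ := ∑ j ∈ I, 2 ^ (j : ℕ)

/-- The run (maximal interval of consecutive integers) of `I` containing `j`
(empty if `j ∉ I`). -/
def runOf (I : Finset ℕ) (j : ℕ) : Finset ℕ :=
  I.filter (fun i => ∀ k ∈ Finset.Icc (min i j) (max i j), k ∈ I)

/-- The set of runs (maximal intervals of consecutive integers) of `I`. -/
def runsOf (I : Finset ℕ) : Finset (Finset ℕ) := I.image (runOf I)

/-- `P` is a prefix of the interval `R`: it consists of an initial segment of `R`. -/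
def IsPrefixOf (P R : Finset ℕ) : Prop :=
  P ⊆ R ∧ ∀ i ∈ R, ∀ j ∈ P, i ≤ j → i ∈ P

open Matrix

/-- Subsets of `Fin (n+1)` split into those without the top element (`inl`) and those with it
(`inr`); this is the splitting of the index set into two blocks. -/
def splitLast (n : ℕ) : Finset (Fin n) ⊕ Finset (Fin n) ≃ Finset (Fin (n + 1)) where
  toFun := Sum.elim (fun I => I.map Fin.castSuccEmb)
    (fun I => insert (Fin.last n) (I.map Fin.castSuccEmb))
  invFun S := if Fin.last n ∈ S then Sum.inr (resSet S) else Sum.inl (resSet S)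
  left_inv := by
    rintro (I | I) <;> simp [resSet, Fin.castSucc_ne_last]
  right_inv := by
    intro S
    by_cases h : Fin.last n ∈ S
    · simp only [h, if_true, Sum.elim_inr]
      ext x
      induction x using Fin.lastCases <;> simp [resSet, h, Fin.castSucc_ne_last]
    · simp only [h, if_false, Sum.elim_inl]
      ext x
      induction x using Fin.lastCases <;> simp [resSet, h, Fin.castSucc_ne_last]

lemma last_mem_splitLast_inl {n : ℕ} (I : Finset (Fin n)) :
    Fin.last n ∉ splitLast n (Sum.inl I) := by
  simp [splitLast, Fin.castSucc_ne_last]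

lemma last_mem_splitLast_inr {n : ℕ} (I : Finset (Fin n)) :
    Fin.last n ∈ splitLast n (Sum.inr I) := by
  simp [splitLast]

lemma resSet_splitLast_inl {n : ℕ} (I : Finset (Fin n)) :
    resSet (splitLast n (Sum.inl I)) = I := by
  simp [splitLast, resSet]

lemma resSet_splitLast_inr {n : ℕ} (I : Finset (Fin n)) :
    resSet (splitLast n (Sum.inr I)) = I := by
  simp [splitLast, resSet, Fin.castSucc_ne_last]

lemma Amat_blocks (n : ℕ) : (Amat (n + 1)).submatrix (splitLast n) (splitLast n) =
    fromBlocks (Amat n) (Amat n) (Amat n) (-Bmat n) := by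
  ext (I | I) (J | J) <;>
    simp [Amat, last_mem_splitLast_inl, last_mem_splitLast_inr, resSet_splitLast_inl,
      resSet_splitLast_inr]

lemma Bmat_blocks (n : ℕ) : (Bmat (n + 1)).submatrix (splitLast n) (splitLast n) =
    fromBlocks (Amat n) (Amat n) 0 (-Bmat n) := by
  ext (I | I) (J | J) <;>
    simp [Bmat, last_mem_splitLast_inl, last_mem_splitLast_inr, resSet_splitLast_inl,
      resSet_splitLast_inr]

lemma det_Bmat_succ_eq_mul (n : ℕ) :
    (Bmat (n + 1)).det = (-1) ^ 2 ^ n * ((Amat n).det * (Bmat n).det) := by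
  rw [← det_submatrix_equiv_self (splitLast n), Bmat_blocks, det_fromBlocks_zero₂₁, det_neg]
  simp
  ring

/-- The family `A + m B` reproduces itself, with `m` raised by one, under block elimination. -/
lemma det_pencil_succ (n : ℕ) (m : ℤ) :
    (Amat (n + 1) + m • Bmat (n + 1)).det =
      (-1) ^ 2 ^ n * (m + 1) ^ 2 ^ n * (Amat n).det * (Amat n + (m + 1) • Bmat n).det := by
  have key : (Amat (n + 1) + m • Bmat (n + 1)).submatrix (splitLast n) (splitLast n) =
      fromBlocks ((m + 1) • (1 : Matrix (Finset (Fin n)) (Finset (Fin n)) ℤ)) 0 0 1 *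
        (fromBlocks 1 0 1 1 *
          fromBlocks (Amat n) (Amat n) 0 (-(Amat n + (m + 1) • Bmat n))) := by
    have h : (Amat (n + 1) + m • Bmat (n + 1)).submatrix (splitLast n) (splitLast n) =
        (Amat (n + 1)).submatrix (splitLast n) (splitLast n) +
          m • (Bmat (n + 1)).submatrix (splitLast n) (splitLast n) := rfl
    rw [h, Amat_blocks, Bmat_blocks, fromBlocks_smul, fromBlocks_add, fromBlocks_multiply,
      fromBlocks_multiply]
    congr 1 <;> simp [add_smul, add_mul] <;> abel
  rw [← det_submatrix_equiv_self (splitLast n), key, det_mul, det_mul, det_fromBlocks_zero₂₁,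
    det_fromBlocks_zero₁₂, det_fromBlocks_zero₂₁, det_neg, det_smul]
  simp
  ring

lemma det_pencil (n : ℕ) (m : ℤ) :
    (Amat n + m • Bmat n).det =
      (Bmat n).det * (m + n + 1) * ∏ k ∈ range n, (m + k + 1) ^ 2 ^ (n - 1 - k) := by
  induction n generalizing m with
  | zero => simp [det_unique, Amat, Bmat]; ring
  | succ n ih =>
    rw [det_pencil_succ, ih, det_Bmat_succ_eq_mul, prod_range_succ']
    have h : ∏ k ∈ range n, (m + ((k + 1 : ℕ) : ℤ) + 1) ^ 2 ^ (n + 1 - 1 - (k + 1)) =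
        ∏ k ∈ range n, (m + 1 + k + 1) ^ 2 ^ (n - 1 - k) := by
      refine prod_congr rfl fun k _ => ?_
      rw [show n + 1 - 1 - (k + 1) = n - 1 - k by omega]
      push_cast
      ring
    rw [h]
    push_cast
    simp only [Nat.sub_zero, add_zero]
    ring

lemma det_Bmat_succ (n : ℕ) :
    (Bmat (n + 1)).det =
      (-1) ^ 2 ^ n * (Bmat n).det ^ 2 * (n + 1) * ∏ k ∈ Icc 1 n, (k : ℤ) ^ 2 ^ (n - k) := by
  have h := det_pencil n 0
  rw [zero_smul, add_zero] at h
  have h' : ∏ k ∈ Icc 1 n, (k : ℤ) ^ 2 ^ (n - k) =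
      ∏ k ∈ range n, (0 + (k : ℤ) + 1) ^ 2 ^ (n - 1 - k) := by
    rw [← Ico_add_one_right_eq_Icc, prod_Ico_eq_prod_range]
    refine prod_congr rfl fun k _ => ?_
    rw [show n - (1 + k) = n - 1 - k by omega]
    push_cast
    ring
  rw [det_Bmat_succ_eq_mul, h, h']
  ring

/-- The recursion satisfied by the exponents, with `d = n - k`. -/
lemma exponent_succ (d : ℕ) :
    2 ^ (d + 1) * (d + 3) / 2 = 2 ^ (d) * (d + 2) / 2 * 2 + 2 ^ d := by
  have h1 : 2 ^ (d + 1) * (d + 3) / 2 = 2 ^ d * (d + 3) := by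
    rw [pow_succ, mul_right_comm, Nat.mul_div_cancel _ two_pos]
  have h2 : 2 ^ d * (d + 2) / 2 * 2 = 2 ^ d * (d + 2) := by
    apply Nat.div_mul_cancel
    cases d with
    | zero => simp
    | succ d => exact (dvd_pow_self 2 d.succ_ne_zero).mul_right _
  rw [h1, h2]
  ring

lemma det_Bmat_zero : (Bmat 0).det = 1 := by simp [det_unique, Bmat]

lemma det_Bmat_one : (Bmat 1).det = -1 := by
  rw [det_Bmat_succ 0, det_Bmat_zero]
  simp

/-- Determinant of `B_n` (the exponent `2^{n-1-k}(n+2-k)` is written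
as `(2^{n-k}(n+2-k))/2`, which is the same integer, also for `k = n`), and
invertibility of `B_n` for all `n ≥ 0`. -/
theorem detB :
    (∀ n : ℕ, 2 ≤ n →
      (Bmat n).det =
        ∏ k ∈ Finset.Icc 1 n, (k : ℤ) ^ ((2 ^ (n - k) * (n + 2 - k)) / 2)) ∧
    (Bmat 0).det = 1 ∧ (Bmat 1).det = -1 ∧
    (∀ n : ℕ, (Bmat n).det ≠ 0) := by
  refine ⟨fun n hn => ?_, det_Bmat_zero, det_Bmat_one, fun n => ?_⟩
  · induction n, hn using Nat.le_induction with
    | base =>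
      rw [det_Bmat_succ 1, det_Bmat_one]
      simp [prod_Icc_succ_top]
    | succ n hn ih =>
      have hs : (-1 : ℤ) ^ 2 ^ n = 1 :=
        Even.neg_one_pow ((Nat.even_pow.2 ⟨even_two, by omega⟩))
      rw [det_Bmat_succ, ih, hs, prod_Icc_succ_top (by omega), ← prod_pow, one_mul, mul_right_comm,
        ← prod_mul_distrib]
      congr 1
      · refine prod_congr rfl fun k hk => ?_
        obtain ⟨d, rfl⟩ := Nat.exists_eq_add_of_le (mem_Icc.1 hk).2
        rw [← pow_mul, ← pow_add, show k + d - k = d by omega, show k + d + 2 - k = d + 2 by omega,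
          show k + d + 1 - k = d + 1 by omega, show k + d + 1 + 2 - k = d + 3 by omega,
          exponent_succ]
      · simp [show n + 1 + 2 - (n + 1) = 2 by omega]
  · induction n with
    | zero => rw [det_Bmat_zero]; exact one_ne_zero
    | succ n ih =>
      rw [det_Bmat_succ]
      have hp : ∏ k ∈ Icc 1 n, (k : ℤ) ^ 2 ^ (n - k) ≠ 0 :=
        prod_ne_zero_iff.2 fun k hk =>
          pow_ne_zero _ (Nat.cast_ne_zero.2 (by have := (mem_Icc.1 hk).1; omega))
      have hn : (n : ℤ) + 1 ≠ 0 := by positivity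
      exact mul_ne_zero (mul_ne_zero (mul_ne_zero (by simp) (pow_ne_zero _ ih)) hn) hp
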